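/- The 14 explicit vectors a, c_s, e_s, f, b_s, d_s (s = 1,2,3) are roots of L = 3E₈⊕H (i.e. each has norm −2), and their Gram matrix realizes the incidence graph of P²(𝔽₂): for a point x and a line l, ⟨x,l⟩ = p if x and l are incident and ⟨x,l⟩ = 0 otherwise, while any two distinct points are orthogonal and any two distinct lines are orthogonal. Consequently the i-reflections in two of these roots braid if the corresponding nodes are joined in the incidence graph and commute otherwise. -/

import Mathlib

/- Formalization over the ring ℋ of Hurwitz integers inside the real quaternions. -/

noncomputable section
open Quaternion Finset

/-- The real quaternions ℍ. -/
abbrev Quat := Quaternion ℝ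

/-- The quaternion `i`. -/
def qi : Quat := ⟨0, 1, 0, 0⟩
/-- The quaternion `j`. -/
def qj : Quat := ⟨0, 0, 1, 0⟩
/-- The quaternion `k`. -/
def qk : Quat := ⟨0, 0, 0, 1⟩
/-- `p = 1 - i`. -/
def qp : Quat := 1 - qi

/-- A quaternion is a Hurwitz integer if it is `(a+bi+cj+dk)/2` with
`a,b,c,d` integers which are all congruent mod `2`. -/
def IsHurwitz (q : Quat) : Prop :=
  ∃ a b c d : ℤ, a % 2 = b % 2 ∧ b % 2 = c % 2 ∧ c % 2 = d % 2 ∧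
    q = ⟨(a : ℝ) / 2, (b : ℝ) / 2, (c : ℝ) / 2, (d : ℝ) / 2⟩

/-- A unit of the ring ℋ of Hurwitz integers. -/
def IsUnitH (q : Quat) : Prop :=
  IsHurwitz q ∧ ∃ r : Quat, IsHurwitz r ∧ q * r = 1 ∧ r * q = 1

/-- Membership in the (two-sided) ideal `pℋ`. -/
def InPH (q : Quat) : Prop := ∃ h : Quat, IsHurwitz h ∧ q = qp * h

/-- The ambient space of the lattice `L = 3E₈ ⊕ H`: three pairs (the `E₈` summands)
together with the two coordinates of the hyperbolic cell `H`. -/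
abbrev V3 : Type := (Fin 3 → Quat × Quat) × Quat × Quat

/-- The ℋ-valued form on `3E₈ ⊕ H`:  negative definite standard form on each `E₈`
summand and the hyperbolic form `⟨(x₁,x₂),(y₁,y₂)⟩ = x̄₁ p̄ y₂ + x̄₂ p y₁` on `H`. -/
def ip3 (x y : V3) : Quat :=
  (∑ s : Fin 3, (-(star (x.1 s).1 * (y.1 s).1) - star (x.1 s).2 * (y.1 s).2))
    + star x.2.1 * star qp * y.2.2 + star x.2.2 * qp * y.2.1

/-- Membership in the `E₈` lattice: both coordinates Hurwitz and congruent mod `pℋ`. -/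
def memE8 (q : Quat × Quat) : Prop := IsHurwitz q.1 ∧ IsHurwitz q.2 ∧ InPH (q.1 - q.2)

/-- Membership in the lattice `L = 3E₈ ⊕ H`. -/
def memL3 (v : V3) : Prop := (∀ s, memE8 (v.1 s)) ∧ IsHurwitz v.2.1 ∧ IsHurwitz v.2.2

/-- Right scalar multiplication on the ambient space of `3E₈ ⊕ H`. -/
def rmul3 (v : V3) (q : Quat) : V3 :=
  (fun s => ((v.1 s).1 * q, (v.1 s).2 * q), v.2.1 * q, v.2.2 * q)

/-- The `μ`-reflection in a root `r` : `v ↦ v − r(1−μ)⟨r,v⟩/|r|²`. -/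
def refl3 (r : V3) (μ : Quat) (v : V3) : V3 := v - rmul3 r ((1 - μ) * ip3 r v / ip3 r r)

/-- The root `a` of the diagram `D`. -/
def rootA : V3 := (fun _ => (0, 0), 1, -1)
/-- The roots `c_s` of the diagram `D`. -/
def rootC (s : Fin 3) : V3 := (fun t => if t = s then ((1 : Quat), (-1 : Quat)) else 0, 0, 0)
/-- The roots `e_s` of the diagram `D` (with `(1,1)` in the two other `E₈` slots). -/
def rootE (s : Fin 3) : V3 := (fun t => if t = s then (0 : Quat × Quat) else (1, 1), -qi, -1)
/-- The root `f` of the diagram `D`. -/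
def rootF : V3 := (fun _ => (0, qp), -(qi * qp), -qp)
/-- The roots `b_s` of the diagram `D`. -/
def rootB (s : Fin 3) : V3 := (fun t => if t = s then ((0 : Quat), qp) else 0, -1, 0)
/-- The roots `d_s` of the diagram `D`. -/
def rootD (s : Fin 3) : V3 := (fun t => if t = s then (-qp, (0 : Quat)) else 0, 0, 0)

/-- The set of roots of `L`. -/
def Roots3 : Set V3 := {r | memL3 r ∧ ip3 r r = -2}

/-- The reflection group `R(L)` of `L = 3E₈ ⊕ H`, as the subgroup of permutations of the
ambient space generated by the `μ`-reflections in all roots of `L` (for all units `μ ≠ 1`). -/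
def RL3 : Subgroup (Equiv.Perm V3) :=
  Subgroup.closure {g | ∃ r μ, r ∈ Roots3 ∧ IsUnitH μ ∧ μ ≠ 1 ∧ ∀ v, g v = refl3 r μ v}

/-- The seven `points` of the diagram `D`. -/
def Pt : Fin 7 → V3 := ![rootA, rootC 0, rootC 1, rootC 2, rootE 0, rootE 1, rootE 2]
/-- The seven `lines` of the diagram `D`. -/
def Ln : Fin 7 → V3 := ![rootF, rootB 0, rootB 1, rootB 2, rootD 0, rootD 1, rootD 2]

/-- Incidence: the point `Pt t` lies on the line `Ln s` iff `⟨Pt t, Ln s⟩ = p`. -/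
def Inc (t s : Fin 7) : Prop := ip3 (Pt t) (Ln s) = qp

/-!
The `μ`-reflection in `x` is `1 - x κ x*` with `κ = (1 - μ) / ⟨x, x⟩`, a rank-one perturbation of
the identity. In any ring, `1 - a` and `1 - b` commute if `a` and `b` do, and they braid if
`a b a = a² - a` and `b a b = b² - b`. For rank-one operators these identities only involve the
inner products of the two vectors, so the relations between the reflections can be read off the
Gram matrix. The incidence graph encoded by the Gram matrix is that of `P²(𝔽₂)` because, with
suitable homogeneous coordinates over `𝔽₂`, `⟨x, l⟩ = p` exactly when the coordinate vectors of `x`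
and `l` are orthogonal.
-/

section Braid

variable {R : Type*} [Ring R] {a b : R}

theorem one_sub_braid (hab : a * b * a = a * a - a) (hba : b * a * b = b * b - b) :
    (1 - a) * (1 - b) * (1 - a) = (1 - b) * (1 - a) * (1 - b) := by
  have expand (c d : R) :
      (1 - c) * (1 - d) * (1 - c) = 1 - c - d + c * d + d * c + (c * c - c - c * d * c) := by
    noncomm_ring
  rw [expand, expand, hab, hba]
  abel

end Braid

section Reflection

variable {x y : V3} {μ ν : Quat}

theorem ip3_add (x v w : V3) : ip3 x (v + w) = ip3 x v + ip3 x w := by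
  simp only [ip3, Fin.sum_univ_three, Prod.fst_add, Prod.snd_add, Pi.add_apply]
  noncomm_ring

theorem ip3_rmul3 (x v : V3) (q : Quat) : ip3 x (rmul3 v q) = ip3 x v * q := by
  simp only [ip3, rmul3, Fin.sum_univ_three]
  noncomm_ring

theorem star_ip3 (x y : V3) : star (ip3 x y) = ip3 y x := by
  simp only [ip3, Fin.sum_univ_three, star_add, star_sub, star_neg, star_mul, star_star, mul_assoc]
  abel

theorem ip3_self_eq_re (x : V3) : ip3 x x = (ip3 x x).re :=
  Quaternion.star_eq_self.1 (star_ip3 x x)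

theorem rmul3_add (v : V3) (q r : Quat) : rmul3 v (q + r) = rmul3 v q + rmul3 v r := by
  ext1
  · funext s
    simp [rmul3, mul_add]
  · simp [rmul3, mul_add]

/-- The rank-one operator `v ↦ x q ⟨y, v⟩`, written `x q y*` in matrix notation. -/
def rankOne (x : V3) (q : Quat) (y : V3) : AddMonoid.End V3 :=
  AddMonoidHom.mk' (fun v ↦ rmul3 x (q * ip3 y v)) fun v w ↦ by
    rw [ip3_add, mul_add, rmul3_add]

theorem rankOne_add (x : V3) (q r : Quat) (y : V3) :
    rankOne x (q + r) y = rankOne x q y + rankOne x r y := by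
  ext1 v
  change rmul3 x ((q + r) * ip3 y v) = rmul3 x (q * ip3 y v) + rmul3 x (r * ip3 y v)
  rw [add_mul, rmul3_add]

theorem rankOne_zero (x y : V3) : rankOne x 0 y = 0 := by
  simpa using rankOne_add x 0 0 y

theorem rankOne_mul_rankOne (x y z w : V3) (q r : Quat) :
    rankOne x q y * rankOne z r w = rankOne x (q * ip3 y z * r) w := by
  ext1 v
  change rmul3 x (q * ip3 y (rmul3 z (r * ip3 w v))) = rmul3 x (q * ip3 y z * r * ip3 w v)
  simp only [ip3_rmul3, mul_assoc]

/-- The operator `a` for which the `μ`-reflection in `x` is `1 - a`. The norm `⟨x, x⟩` is real, so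
dividing by it is a real scaling, which may be moved past any quaternion. -/
def reflDefect (x : V3) (μ : Quat) : AddMonoid.End V3 :=
  rankOne x ((ip3 x x).re⁻¹ • (1 - μ)) x

theorem refl3_eq (x : V3) (μ : Quat) (v : V3) : refl3 x μ v = (1 - reflDefect x μ) v := by
  have coeff : (1 - μ) * ip3 x v / ip3 x x = ((ip3 x x).re⁻¹ • (1 - μ)) * ip3 x v := by
    rw [ip3_self_eq_re x, Quaternion.re_coe, div_eq_mul_inv, ← Quaternion.coe_inv,
      Quaternion.mul_coe_eq_smul, smul_mul_assoc]
  rw [refl3, coeff]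
  rfl

theorem refl3_comm (h : ip3 x y = 0) (μ ν : Quat) (v : V3) :
    refl3 x μ (refl3 y ν v) = refl3 y ν (refl3 x μ v) := by
  have h' : ip3 y x = 0 := by rw [← star_ip3, h, star_zero]
  have defects_comm : Commute (reflDefect x μ) (reflDefect y ν) := by
    simp only [Commute, SemiconjBy, reflDefect, rankOne_mul_rankOne, h, h', mul_zero, zero_mul,
      rankOne_zero]
  have refls_comm : Commute (1 - reflDefect x μ) (1 - reflDefect y ν) :=
    .sub_left (.one_left _) (.sub_right (.one_right _) defects_comm)
  simp only [refl3_eq]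
  exact DFunLike.congr_fun refls_comm.eq v

theorem reflDefect_mul_reflDefect_mul_reflDefect (hx : ip3 x x ≠ 0) (hy : ip3 y y ≠ 0)
    (hxy : (1 - μ) * ip3 x y * (1 - ν) * ip3 y x = -(ip3 x x * ip3 y y * μ)) :
    reflDefect x μ * reflDefect y ν * reflDefect x μ =
      reflDefect x μ * reflDefect x μ - reflDefect x μ := by
  have hx_re : (ip3 x x).re ≠ 0 := fun h ↦ hx (by rw [ip3_self_eq_re, h, Quaternion.coe_zero])
  have hy_re : (ip3 y y).re ≠ 0 := fun h ↦ hy (by rw [ip3_self_eq_re, h, Quaternion.coe_zero])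
  rw [ip3_self_eq_re x, ip3_self_eq_re y, ← Quaternion.coe_mul, Quaternion.coe_mul_eq_smul] at hxy
  have self : (ip3 x x).re⁻¹ • (1 - μ) * ip3 x x = 1 - μ := by
    rw [ip3_self_eq_re x, Quaternion.re_coe, Quaternion.mul_coe_eq_smul, smul_inv_smul₀ hx_re]
  have cross :
      (ip3 x x).re⁻¹ • (1 - μ) * ip3 x y * (ip3 y y).re⁻¹ • (1 - ν) * ip3 y x = -μ := by
    simp only [smul_mul_assoc, mul_smul_comm, hxy, smul_neg]
    simp [smul_smul, hx_re, hy_re]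
  rw [eq_sub_iff_add_eq]
  simp only [reflDefect, rankOne_mul_rankOne, ← rankOne_add, self, cross]
  rw [neg_mul, sub_mul, one_mul, neg_add_eq_sub]

theorem refl3_braid (hx : ip3 x x ≠ 0) (hy : ip3 y y ≠ 0)
    (hxy : (1 - μ) * ip3 x y * (1 - ν) * ip3 y x = -(ip3 x x * ip3 y y * μ))
    (hyx : (1 - ν) * ip3 y x * (1 - μ) * ip3 x y = -(ip3 y y * ip3 x x * ν)) (v : V3) :
    refl3 x μ (refl3 y ν (refl3 x μ v)) = refl3 y ν (refl3 x μ (refl3 y ν v)) := by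
  simp only [refl3_eq]
  exact DFunLike.congr_fun (one_sub_braid
    (reflDefect_mul_reflDefect_mul_reflDefect hx hy hxy)
    (reflDefect_mul_reflDefect_mul_reflDefect hy hx hyx)) v

end Reflection

section Quaternions

instance : CharZero Quat := charZero_of_injective_algebraMap (algebraMap ℝ Quat).injective

theorem star_qi : star qi = -qi :=
  Quaternion.star_eq_neg.2 rfl

theorem qi_mul_qi : qi * qi = -1 := by
  ext <;> simp <;> simp [qi]

theorem star_qp : star qp = 1 + qi := by
  simp [qp, star_qi]

theorem qi_mul_qp : qi * qp = star qp := by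
  rw [star_qp, qp, mul_sub, mul_one, qi_mul_qi]
  abel

theorem qp_mul_qi : qp * qi = star qp := by
  rw [star_qp, qp, sub_mul, one_mul, qi_mul_qi]
  abel

theorem qp_add_star_qp : qp + star qp = 2 := by
  rw [star_qp, qp, sub_add_add_cancel, one_add_one_eq_two]

theorem qp_mul_star_qp : qp * star qp = 2 := by
  rw [star_qp, mul_add, mul_one, qp_mul_qi, qp_add_star_qp]

theorem star_qp_mul_qp : star qp * qp = 2 := by
  rw [star_qp, add_mul, one_mul, qi_mul_qp, qp_add_star_qp]

theorem qp_mul_qp : qp * qp = -(2 * qi) := by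
  nth_rw 2 [qp]
  rw [mul_sub, mul_one, qp_mul_qi, star_qp, qp]
  noncomm_ring

theorem qp_ne_zero : qp ≠ 0 := by
  intro h
  simpa [h] using qp_mul_star_qp

theorem qp_ne_neg_two : qp ≠ -2 := by
  intro h
  have := qp_mul_star_qp
  norm_num [h] at this

end Quaternions

theorem refl3_qi_braid {x y : V3} (hx : ip3 x x = -2) (hy : ip3 y y = -2) (h : ip3 x y = qp)
    (v : V3) :
    refl3 x qi (refl3 y qi (refl3 x qi v)) = refl3 y qi (refl3 x qi (refl3 y qi v)) := by
  have h' : ip3 y x = star qp := by rw [← star_ip3, h]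
  apply refl3_braid
  · norm_num [hx]
  · norm_num [hy]
  · rw [← qp, h, h', hx, hy, mul_assoc, qp_mul_star_qp, qp_mul_qp]
    noncomm_ring
  · rw [← qp, h, h', hx, hy, qp_mul_star_qp, mul_assoc, qp_mul_qp]
    noncomm_ring

section Hurwitz

theorem IsHurwitz.sub {q r : Quat} (hq : IsHurwitz q) (hr : IsHurwitz r) : IsHurwitz (q - r) := by
  obtain ⟨a, b, c, d, hab, hbc, hcd, rfl⟩ := hq
  obtain ⟨a', b', c', d', hab', hbc', hcd', rfl⟩ := hr
  refine ⟨a - a', b - b', c - c', d - d', by omega, by omega, by omega, ?_⟩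
  ext <;> simp only [Int.cast_sub, sub_div] <;> rfl

theorem isHurwitz_zero : IsHurwitz 0 := ⟨0, 0, 0, 0, rfl, rfl, rfl, by ext <;> simp⟩

theorem isHurwitz_one : IsHurwitz 1 := ⟨2, 0, 0, 0, rfl, rfl, rfl, by ext <;> simp⟩

theorem isHurwitz_qi : IsHurwitz qi := ⟨0, 2, 0, 0, rfl, rfl, rfl, by ext <;> simp [qi]⟩

theorem IsHurwitz.neg {q : Quat} (hq : IsHurwitz q) : IsHurwitz (-q) := by
  simpa using isHurwitz_zero.sub hq

theorem isHurwitz_qp : IsHurwitz qp := isHurwitz_one.sub isHurwitz_qi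

theorem isHurwitz_star_qp : IsHurwitz (star qp) := by
  simpa [star_qp] using isHurwitz_one.sub isHurwitz_qi.neg

theorem memE8_self {q : Quat} (hq : IsHurwitz q) : memE8 (q, q) :=
  ⟨hq, hq, 0, isHurwitz_zero, by simp⟩

theorem memE8_zero : memE8 0 := memE8_self isHurwitz_zero

theorem memE8_one_neg_one : memE8 (1, -1) :=
  ⟨isHurwitz_one, isHurwitz_one.neg, star qp, isHurwitz_star_qp, by
    rw [qp_mul_star_qp, sub_neg_eq_add, one_add_one_eq_two]⟩

theorem memE8_zero_qp : memE8 (0, qp) :=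
  ⟨isHurwitz_zero, isHurwitz_qp, -1, isHurwitz_one.neg, by simp⟩

theorem memE8_neg_qp_zero : memE8 (-qp, 0) :=
  ⟨isHurwitz_qp.neg, isHurwitz_zero, -1, isHurwitz_one.neg, by simp⟩

theorem memE8_ite {P : Prop} [Decidable P] {u v : Quat × Quat} (hu : memE8 u) (hv : memE8 v) :
    memE8 (if P then u else v) := by
  split_ifs <;> assumption

theorem memL3_rootA : memL3 rootA :=
  ⟨fun _ ↦ memE8_zero, isHurwitz_one, isHurwitz_one.neg⟩

theorem memL3_rootB (s : Fin 3) : memL3 (rootB s) :=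
  ⟨fun _ ↦ memE8_ite memE8_zero_qp memE8_zero, isHurwitz_one.neg, isHurwitz_zero⟩

theorem memL3_rootC (s : Fin 3) : memL3 (rootC s) :=
  ⟨fun _ ↦ memE8_ite memE8_one_neg_one memE8_zero, isHurwitz_zero, isHurwitz_zero⟩

theorem memL3_rootD (s : Fin 3) : memL3 (rootD s) :=
  ⟨fun _ ↦ memE8_ite memE8_neg_qp_zero memE8_zero, isHurwitz_zero, isHurwitz_zero⟩

theorem memL3_rootE (s : Fin 3) : memL3 (rootE s) :=
  ⟨fun _ ↦ memE8_ite memE8_zero (memE8_self isHurwitz_one), isHurwitz_qi.neg, isHurwitz_one.neg⟩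

theorem memL3_rootF : memL3 rootF :=
  ⟨fun _ ↦ memE8_zero_qp, (qi_mul_qp ▸ isHurwitz_star_qp).neg, isHurwitz_qp.neg⟩

theorem memL3_Pt (t : Fin 7) : memL3 (Pt t) := by
  fin_cases t
  exacts [memL3_rootA, memL3_rootC 0, memL3_rootC 1, memL3_rootC 2,
    memL3_rootE 0, memL3_rootE 1, memL3_rootE 2]

theorem memL3_Ln (s : Fin 7) : memL3 (Ln s) := by
  fin_cases s
  exacts [memL3_rootF, memL3_rootB 0, memL3_rootB 1, memL3_rootB 2,
    memL3_rootD 0, memL3_rootD 1, memL3_rootD 2]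

end Hurwitz

section GramMatrix

theorem ip3_rootA (x : V3) : ip3 x rootA = star x.2.2 * qp - star x.2.1 * star qp := by
  simp [ip3, rootA, sub_eq_add_neg, add_comm]

theorem ip3_rootB (x : V3) (s : Fin 3) :
    ip3 x (rootB s) = -((star (x.1 s).2 + star x.2.2) * qp) := by
  simp [ip3, rootB, apply_ite Prod.fst, apply_ite Prod.snd, add_mul, add_comm]

theorem ip3_rootC (x : V3) (s : Fin 3) :
    ip3 x (rootC s) = star (x.1 s).2 - star (x.1 s).1 := by
  simp [ip3, rootC, apply_ite Prod.fst, apply_ite Prod.snd, neg_add_eq_sub]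

theorem ip3_rootD (x : V3) (s : Fin 3) : ip3 x (rootD s) = star (x.1 s).1 * qp := by
  simp [ip3, rootD, apply_ite Prod.fst, apply_ite Prod.snd]

theorem ip3_rootE (x : V3) (s : Fin 3) :
    ip3 x (rootE s) = -(∑ t, if t = s then 0 else star (x.1 t).1 + star (x.1 t).2) -
      (star x.2.1 + star x.2.2) * star qp := by
  have slot (t : Fin 3) :
      -(star (x.1 t).1 * ((rootE s).1 t).1) - star (x.1 t).2 * ((rootE s).1 t).2 =
        -if t = s then 0 else star (x.1 t).1 + star (x.1 t).2 := by
    simp only [rootE]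
    split_ifs <;> simp [sub_eq_add_neg, add_comm]
  have hyperbolic :
      star x.2.1 * star qp * (rootE s).2.2 + star x.2.2 * qp * (rootE s).2.1 =
        -((star x.2.1 + star x.2.2) * star qp) := by
    simp [rootE, mul_assoc, qp_mul_qi, add_mul, add_comm]
  simp only [ip3, slot]
  rw [add_assoc, hyperbolic, Finset.sum_neg_distrib, sub_eq_add_neg]

theorem ip3_rootF (x : V3) :
    ip3 x rootF = -((∑ t, star (x.1 t).2) * qp + (star x.2.1 + star x.2.2) * 2) := by
  simp [ip3, rootF, mul_assoc, qi_mul_qp, qp_mul_star_qp, star_qp_mul_qp, add_mul,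
    Finset.sum_mul, add_assoc, add_comm, add_left_comm]

theorem ip3_Pt_Pt (t t' : Fin 7) : ip3 (Pt t) (Pt t') = if t = t' then -2 else 0 := by
  fin_cases t' <;>
    simp only [Pt, Fin.reduceFinMk, Matrix.cons_val, ip3_rootA, ip3_rootC, ip3_rootE,
      Fin.sum_univ_three] <;>
    fin_cases t <;>
    simp [rootA, rootC, rootE, star_qi, qp, qi_mul_qi, add_mul, mul_add,
      ← one_add_one_eq_two] <;>
    abel

theorem ip3_Ln_Ln (s s' : Fin 7) : ip3 (Ln s) (Ln s') = if s = s' then -2 else 0 := by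
  fin_cases s' <;>
    simp only [Ln, Fin.reduceFinMk, Matrix.cons_val, ip3_rootB, ip3_rootD, ip3_rootF,
      Fin.sum_univ_three] <;>
    fin_cases s <;>
    simp [rootB, rootD, rootF, star_qi, qp, qi_mul_qi, add_mul, mul_add, mul_sub, sub_mul,
      ← one_add_one_eq_two] <;>
    abel

theorem ip3_Pt_self (t : Fin 7) : ip3 (Pt t) (Pt t) = -2 := by
  rw [ip3_Pt_Pt, if_pos rfl]

theorem ip3_Ln_self (s : Fin 7) : ip3 (Ln s) (Ln s) = -2 := by
  rw [ip3_Ln_Ln, if_pos rfl]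

theorem ip3_Pt_of_ne {t t' : Fin 7} (h : t ≠ t') : ip3 (Pt t) (Pt t') = 0 := by
  rw [ip3_Pt_Pt, if_neg h]

theorem ip3_Ln_of_ne {s s' : Fin 7} (h : s ≠ s') : ip3 (Ln s) (Ln s') = 0 := by
  rw [ip3_Ln_Ln, if_neg h]

/-- Homogeneous coordinates over `𝔽₂` of the points of `P²(𝔽₂)`, and dually of its lines, in the
order in which `Pt` and `Ln` list them: `a` and `f` get `(1, 1, 1)`, `e_s` and `d_s` the `s`-th unit
vector, `c_s` and `b_s` its complement. -/
def fanoCoord : Fin 7 → Fin 3 → ZMod 2 :=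
  ![![1, 1, 1], ![0, 1, 1], ![1, 0, 1], ![1, 1, 0], ![1, 0, 0], ![0, 1, 0], ![0, 0, 1]]

theorem ip3_Pt_Ln (t s : Fin 7) :
    ip3 (Pt t) (Ln s) = if fanoCoord t ⬝ᵥ fanoCoord s = 0 then qp else 0 := by
  fin_cases s <;>
    simp only [Ln, Fin.reduceFinMk, Matrix.cons_val, ip3_rootB, ip3_rootD, ip3_rootF,
      Fin.sum_univ_three] <;>
    fin_cases t <;>
    simp [Pt, rootA, rootC, rootE, fanoCoord, CharTwo.add_self_eq_zero, star_qi, qp, add_mul,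
      mul_add, ← one_add_one_eq_two] <;>
    abel

theorem ip3_Pt_Ln_of_not_inc {t s : Fin 7} (h : ¬Inc t s) : ip3 (Pt t) (Ln s) = 0 := by
  rw [Inc, ip3_Pt_Ln] at h
  rw [ip3_Pt_Ln]
  split_ifs at h ⊢ <;> trivial

theorem injective_of_pairwise_ip3_eq_zero {ι : Type*} {f : ι → V3}
    (hself : ∀ i, ip3 (f i) (f i) ≠ 0) (hpair : Pairwise fun i j ↦ ip3 (f i) (f j) = 0) :
    Function.Injective f := by
  intro i j hij
  by_contra hne
  exact hself i (by simpa only [← hij] using hpair hne)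

theorem Pt_injective : Function.Injective Pt :=
  injective_of_pairwise_ip3_eq_zero (by norm_num [ip3_Pt_self]) fun _ _ ↦ ip3_Pt_of_ne

theorem Ln_injective : Function.Injective Ln :=
  injective_of_pairwise_ip3_eq_zero (by norm_num [ip3_Ln_self]) fun _ _ ↦ ip3_Ln_of_ne

theorem Pt_ne_Ln (t s : Fin 7) : Pt t ≠ Ln s := by
  intro h
  have norm_eq : ip3 (Pt t) (Ln s) = -2 := by rw [← h, ip3_Pt_self]
  by_cases hinc : Inc t s
  · exact qp_ne_neg_two (hinc.symm.trans norm_eq)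
  · norm_num [ip3_Pt_Ln_of_not_inc hinc] at norm_eq

end GramMatrix

section Incidence

theorem inc_iff {t s : Fin 7} : Inc t s ↔ fanoCoord t ⬝ᵥ fanoCoord s = 0 := by
  rw [Inc, ip3_Pt_Ln, ite_eq_left_iff]
  simp only [qp_ne_zero.symm, imp_false, not_not]

theorem inc_comm {t s : Fin 7} : Inc t s ↔ Inc s t := by
  rw [inc_iff, inc_iff, dotProduct_comm]

theorem existsUnique_line_through {t t' : Fin 7} (h : t ≠ t') : ∃! s, Inc t s ∧ Inc t' s := by
  simp only [inc_iff, ExistsUnique]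
  decide +revert

theorem existsUnique_point_on {s s' : Fin 7} (h : s ≠ s') : ∃! t, Inc t s ∧ Inc t s' := by
  simpa only [inc_comm (t := s), inc_comm (t := s')] using existsUnique_line_through h

theorem exists_three_lines_through (t : Fin 7) :
    ∃ s₁ s₂ s₃ : Fin 7, s₁ ≠ s₂ ∧ s₁ ≠ s₃ ∧ s₂ ≠ s₃ ∧ ∀ s, Inc t s ↔ s = s₁ ∨ s = s₂ ∨ s = s₃ := by
  have card_eq : #{s | fanoCoord t ⬝ᵥ fanoCoord s = 0} = 3 := by decide +revert
  obtain ⟨s₁, s₂, s₃, h₁₂, h₁₃, h₂₃, lines⟩ := Finset.card_eq_three.1 card_eq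
  refine ⟨s₁, s₂, s₃, h₁₂, h₁₃, h₂₃, fun s ↦ ?_⟩
  simpa [inc_iff] using Finset.ext_iff.1 lines s

theorem exists_three_points_on (s : Fin 7) :
    ∃ t₁ t₂ t₃ : Fin 7, t₁ ≠ t₂ ∧ t₁ ≠ t₃ ∧ t₂ ≠ t₃ ∧ ∀ t, Inc t s ↔ t = t₁ ∨ t = t₂ ∨ t = t₃ := by
  simpa only [inc_comm (t := s)] using exists_three_lines_through s

end Incidence

/-- The 14 explicit vectors are roots of `L = 3E₈ ⊕ H`, their Gram
matrix realizes the incidence graph of `P²(𝔽₂)` (point–line inner products are `p` or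
`0`, distinct points are orthogonal, distinct lines are orthogonal, and the incidence
relation satisfies the axioms of the projective plane of order 2), and the
`i`-reflections in two of these roots braid when the nodes are joined and commute
otherwise. -/
theorem diagram_realizes_incidence_graph_of_P2F2 :
    (∀ t : Fin 7, memL3 (Pt t) ∧ ip3 (Pt t) (Pt t) = -2) ∧
    (∀ s : Fin 7, memL3 (Ln s) ∧ ip3 (Ln s) (Ln s) = -2) ∧
    Function.Injective Pt ∧ Function.Injective Ln ∧ (∀ t s, Pt t ≠ Ln s) ∧
    (∀ t s, ip3 (Pt t) (Ln s) = qp ∨ ip3 (Pt t) (Ln s) = 0) ∧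
    (∀ t t', t ≠ t' → ip3 (Pt t) (Pt t') = 0) ∧
    (∀ s s', s ≠ s' → ip3 (Ln s) (Ln s') = 0) ∧
    (∀ t t', t ≠ t' → ∃! s, Inc t s ∧ Inc t' s) ∧
    (∀ s s', s ≠ s' → ∃! t, Inc t s ∧ Inc t s') ∧
    (∀ s, ∃ t₁ t₂ t₃ : Fin 7, t₁ ≠ t₂ ∧ t₁ ≠ t₃ ∧ t₂ ≠ t₃ ∧
      (∀ t, Inc t s ↔ t = t₁ ∨ t = t₂ ∨ t = t₃)) ∧
    (∀ t, ∃ s₁ s₂ s₃ : Fin 7, s₁ ≠ s₂ ∧ s₁ ≠ s₃ ∧ s₂ ≠ s₃ ∧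
      (∀ s, Inc t s ↔ s = s₁ ∨ s = s₂ ∨ s = s₃)) ∧
    (∀ t s, Inc t s → ∀ v, refl3 (Pt t) qi (refl3 (Ln s) qi (refl3 (Pt t) qi v))
        = refl3 (Ln s) qi (refl3 (Pt t) qi (refl3 (Ln s) qi v))) ∧
    (∀ t s, ¬ Inc t s → ∀ v, refl3 (Pt t) qi (refl3 (Ln s) qi v)
        = refl3 (Ln s) qi (refl3 (Pt t) qi v)) ∧
    (∀ t t', t ≠ t' → ∀ v, refl3 (Pt t) qi (refl3 (Pt t') qi v)
        = refl3 (Pt t') qi (refl3 (Pt t) qi v)) ∧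
    (∀ s s', s ≠ s' → ∀ v, refl3 (Ln s) qi (refl3 (Ln s') qi v)
        = refl3 (Ln s') qi (refl3 (Ln s) qi v)) := by
  refine ⟨fun t ↦ ⟨memL3_Pt t, ip3_Pt_self t⟩, fun s ↦ ⟨memL3_Ln s, ip3_Ln_self s⟩,
    Pt_injective, Ln_injective, Pt_ne_Ln, ?gram, fun _ _ ↦ ip3_Pt_of_ne, fun _ _ ↦ ip3_Ln_of_ne,
    fun _ _ ↦ existsUnique_line_through, fun _ _ ↦ existsUnique_point_on,
    exists_three_points_on, exists_three_lines_through, ?braid, ?comm_of_not_inc,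
    ?points_comm, ?lines_comm⟩
  case gram =>
    exact fun t s ↦ (em (Inc t s)).imp id ip3_Pt_Ln_of_not_inc
  case braid =>
    exact fun t s h ↦ refl3_qi_braid (ip3_Pt_self t) (ip3_Ln_self s) h
  case comm_of_not_inc =>
    exact fun t s h ↦ refl3_comm (ip3_Pt_Ln_of_not_inc h) qi qi
  case points_comm =>
    exact fun t t' h ↦ refl3_comm (ip3_Pt_of_ne h) qi qi
  case lines_comm =>
    exact fun s s' h ↦ refl3_comm (ip3_Ln_of_ne h) qi qi
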